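/- (Theorem 1) Let k > 1 and g ≥ 1 be integers and α ∈ ℂ a nonzero constant. In the algebra of ℂ-linear endomorphisms of ℂ[x], define the operator L = (D^{2k} − 2X∘D^{k} − k·D^{k−1} + D³ + X² + α)² + g(g+1)·D, an operator of order 4k with polynomial coefficients. Then there exist an ordinary differential operator M of order 4kg + 2k with polynomial coefficients, i.e. M = Σ_{j=0}^{4kg+2k} P_j(X)∘D^j with each P_j ∈ ℂ[x] and P_{4kg+2k} ≠ 0, and constants a_0, …, a_{2g} ∈ ℂ such that L∘M = M∘L and M² = L^{2g+1} + a_{2g}·L^{2g} + … + a_1·L + a_0. -/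

import Mathlib

open Polynomial Finset

/-- The differentiation operator on `ℂ[x]`, as a `ℂ`-linear endomorphism. -/
noncomputable def Dop : Module.End ℂ (Polynomial ℂ) := Polynomial.derivative

/-- The operator of multiplication by `x` on `ℂ[x]`, as a `ℂ`-linear endomorphism. -/
noncomputable def Xop : Module.End ℂ (Polynomial ℂ) := LinearMap.mulLeft ℂ Polynomial.X

/-!
Put `u = ∂` and `d = ∂ᵏ - x`. Then `[d, u] = 1`, so `d` acts on polynomials in `u` as `d/du`, and
`L = (d² + V(u))² + W(u)` with `V = u³ + α` and `W = g(g+1)u`. By Mironov's method, a polynomial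
`P(u, z)` with `P⁽⁵⁾ + 4VP''' + 6V'P'' + (2V'' + 4(z - W))P' - 2W'P = 0` yields an operator
commuting with `L`: the operator `2P(d² + V) - 2P'd + P''` commutes with `L` modulo `L - z`, and its
square is a first integral of the equation there, hence a polynomial in `z` alone. Substituting `L`
for `z` gives `M`.

Writing `P = ∑ qᵢ zⁱ`, the equation becomes `E qᵢ₊₁ = -4 qᵢ'`, `E q₀ = 0`, where `E` is triangular
in the monomial basis with eigenvalues proportional to `m(m+1) - g(g+1)`. So `q₀` exists in degree
`g`, the remaining `qᵢ` can be solved for, and each step lowers the degree by one.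
-/

section DifferentialRing

variable {k R A : Type*} [CommRing k] [CommRing R] [Algebra k R] [Ring A]

/-- The element `d` of `A` implements the derivation `δ` of `R`, whose elements act on `A` through
`φ`: commuting with `d` differentiates. This is the relation between `d/du` and multiplication
operators, without fixing a realization of either. -/
def Implements (δ : Derivation k R R) (φ : R →+* A) (d : A) : Prop :=
  ∀ f, d * φ f = φ f * d + φ (δ f)

/-- Mironov's operator `(d² + V)² + W`, of order four in `d`. -/
def quarticOp (φ : R →+* A) (d : A) (V W : R) : A := (d ^ 2 + φ V) ^ 2 + φ W

/-- The operator `2P(d² + V) - 2P'd + P''`, of order two in `d`. When `P` depends on a spectral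
parameter `z` and solves Mironov's equation, it commutes with `quarticOp φ d V W` modulo
`quarticOp φ d V W - z`. -/
def companionOp (δ : Derivation k R R) (φ : R →+* A) (d : A) (V P : R) : A :=
  φ (2 * P) * (d ^ 2 + φ V) - φ (2 * δ P) * d + φ (δ (δ P))

/-- The differential operator `P ↦ P⁽⁵⁾ + 4VP''' + 6V'P'' + (2V'' - 4W)P' - 2W'P`, the obstruction
to commutation of `quarticOp φ d V W` and `companionOp δ φ d V P` at spectral parameter `0`. -/
def mironovODE (δ : Derivation k R R) (V W : R) : R →ₗ[k] R where
  toFun P := δ (δ (δ (δ (δ P)))) + 4 * V * δ (δ (δ P)) + 6 * δ V * δ (δ P) + 2 * δ (δ V) * δ P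
    - 4 * W * δ P - 2 * δ W * P
  map_add' P Q := by simp only [map_add]; ring
  map_smul' c P := by
    simp only [Derivation.map_smul, mul_smul_comm, smul_add, smul_sub, RingHom.id_apply]

theorem mironovODE_apply (δ : Derivation k R R) (V W P : R) :
    mironovODE δ V W P = δ (δ (δ (δ (δ P)))) + 4 * V * δ (δ (δ P)) + 6 * δ V * δ (δ P)
      + 2 * δ (δ V) * δ P - 4 * W * δ P - 2 * δ W * P :=
  rfl

/-- The quadratic form in `P` and its derivatives that is a first integral of `mironovODE`; it is
the value of `companionOp δ φ d V P ^ 2` on the kernel of `quarticOp φ d V W`. -/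
def mironovForm (δ : Derivation k R R) (V W P : R) : R :=
  2 * P * (4 * V * δ (δ P) + 2 * δ V * δ P + δ (δ (δ (δ P)))) - 4 * V * δ P ^ 2
    - 2 * δ P * δ (δ (δ P)) + δ (δ P) ^ 2 - 4 * W * P ^ 2

theorem derivation_ofNat (δ : Derivation k R R) (n : ℕ) [n.AtLeastTwo] :
    δ ofNat(n) = 0 :=
  δ.map_natCast n

theorem derivation_mironovForm (δ : Derivation k R R) (V W P : R) :
    δ (mironovForm δ V W P) = 2 * P * mironovODE δ V W P := by
  simp only [mironovForm, mironovODE_apply, map_add, map_sub,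
    Derivation.leibniz, derivation_ofNat, smul_eq_mul, pow_two]
  ring

variable {δ : Derivation k R R} {φ : R →+* A} {d : A}

theorem Implements.mul_map_mul (hd : Implements δ φ d) (f : R) (a : A) :
    d * (φ f * a) = φ f * (d * a) + φ (δ f) * a := by
  rw [← mul_assoc, hd, add_mul, mul_assoc]

theorem quarticOp_mul_companionOp_sub (hd : Implements δ φ d) (V W P : R) :
    quarticOp φ d V W * companionOp δ φ d V P - companionOp δ φ d V P * quarticOp φ d V W =
      (φ (8 * δ P) * d + φ (4 * δ (δ P))) * quarticOp φ d V W
        + φ (2 * mironovODE δ V W P) * d + φ (δ (mironovODE δ V W P)) := by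
  -- Viewing `A` as an `R`-module through `φ` reduces the identity to one between the
  -- coefficients of each power of `d`.
  let : Module R A := Module.compHom A φ
  have smul_one (f : R) : φ f = f • (1 : A) := (mul_one _).symm
  have smul_mul (f : R) (a b : A) : f • a * b = f • (a * b) := mul_assoc _ _ _
  have mul_smul (f : R) (a : A) : d * f • a = f • (d * a) + δ f • a := hd.mul_map_mul f a
  simp only [quarticOp, companionOp, mironovODE_apply, pow_two,
    smul_one, smul_mul, mul_smul, smul_add, mul_add, add_mul, mul_sub, sub_mul, mul_one, one_mul,
    mul_assoc, map_add, map_sub, map_zero, Derivation.leibniz, derivation_ofNat, smul_eq_mul]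
  match_scalars <;> ring

theorem companionOp_mul_self (hd : Implements δ φ d) (V W P : R) :
    companionOp δ φ d V P * companionOp δ φ d V P =
      φ (4 * P ^ 2) * quarticOp φ d V W + φ (mironovForm δ V W P) := by
  let : Module R A := Module.compHom A φ
  have smul_one (f : R) : φ f = f • (1 : A) := (mul_one _).symm
  have smul_mul (f : R) (a b : A) : f • a * b = f • (a * b) := mul_assoc _ _ _
  have mul_smul (f : R) (a : A) : d * f • a = f • (d * a) + δ f • a := hd.mul_map_mul f a
  simp only [quarticOp, companionOp, mironovForm, pow_two, smul_one, smul_mul, mul_smul, smul_add,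
    mul_add, add_mul, mul_sub, sub_mul, mul_one, one_mul, mul_assoc, map_add, map_zero,
    Derivation.leibniz, derivation_ofNat, smul_eq_mul]
  match_scalars <;> ring

end DifferentialRing

section SpectralParameter

variable {k R A : Type*} [CommRing k] [CommRing R] [Algebra k R] [Ring A]

/-- The derivation of `R[z]` which applies `δ` to the coefficients and annihilates the spectral
parameter `z`. -/
noncomputable def coeffDerivation (δ : Derivation k R R) : Derivation k R[X] R[X] :=
  PolynomialModule.equivPolynomialSelf.compDer δ.mapCoeffs

@[simp]
theorem coeff_coeffDerivation (δ : Derivation k R R) (P : R[X]) (i : ℕ) :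
    (coeffDerivation δ P).coeff i = δ (P.coeff i) :=
  rfl

@[simp]
theorem coeffDerivation_C (δ : Derivation k R R) (f : R) :
    coeffDerivation δ (C f) = C (δ f) := by
  ext i
  rcases i with _ | i <;> simp [coeff_C]

@[simp]
theorem coeffDerivation_X (δ : Derivation k R R) : coeffDerivation δ X = 0 := by
  ext i
  simp [coeff_X, apply_ite δ]

theorem natDegree_coeffDerivation_le (δ : Derivation k R R) (P : R[X]) :
    (coeffDerivation δ P).natDegree ≤ P.natDegree := by
  rw [natDegree_le_iff_coeff_eq_zero]
  intro i hi
  rw [coeff_coeffDerivation, coeff_eq_zero_of_natDegree_lt hi, map_zero]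

/-- `P ∈ R[z]` solves Mironov's equation
`P⁽⁵⁾ + 4VP''' + 6V'P'' + (2V'' + 4(z - W))P' - 2W'P = 0`, in which the derivatives do not act on
the spectral parameter `z`. -/
def IsMironovSolution (δ : Derivation k R R) (V W : R) (P : R[X]) : Prop :=
  mironovODE (coeffDerivation δ) (C V) (C W) P = -(4 * X * coeffDerivation δ P)

/-- The polynomial `F ∈ R[z]` with `M² = F(L)` for `L = quarticOp φ d V W` and
`M = mironovOp δ φ d V W P`; its zeros are the finite branch points of the spectral curve. -/
noncomputable def spectralPoly (δ : Derivation k R R) (V W : R) (P : R[X]) : R[X] :=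
  4 * X * P ^ 2 + mironovForm (coeffDerivation δ) (C V) (C W) P

theorem coeff_mironovODE (δ : Derivation k R R) (V W : R) (P : R[X]) (i : ℕ) :
    (mironovODE (coeffDerivation δ) (C V) (C W) P).coeff i = mironovODE δ V W (P.coeff i) := by
  simp only [mironovODE_apply, coeffDerivation_C, mul_assoc,
    coeff_add, coeff_sub, coeff_ofNat_mul, coeff_C_mul, coeff_coeffDerivation]

theorem coeff_companionOp (δ : Derivation k R R) (φ : R →+* A) (d : A) (V : R) (P : R[X]) (i : ℕ) :
    (companionOp (coeffDerivation δ) (mapRingHom φ) (C d) (C V) P).coeff i =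
      companionOp δ φ d V (P.coeff i) := by
  have two_eq_C : (2 : R[X]) = C 2 := rfl
  simp only [companionOp, two_eq_C, coe_mapRingHom, map_C, ← C_pow, ← C_add, coeff_add, coeff_sub,
    coeff_mul_C, coeff_map, coeff_C_mul, coeff_coeffDerivation]

theorem mapRingHom_quarticOp (φ : R →+* A) (d : A) (V W : R) :
    quarticOp (mapRingHom φ) (C d) (C V) (C W) = C (quarticOp φ d V W) := by
  simp [quarticOp]

variable {δ : Derivation k R R} {φ : R →+* A} {d : A}

theorem Implements.coeffDerivation (hd : Implements δ φ d) :
    Implements (coeffDerivation δ) (mapRingHom φ) (C d) := by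
  intro P
  ext i
  simpa using hd (P.coeff i)

theorem eval_mul_of_commute_eval {x : A} {q : A[X]} (h : Commute x (q.eval x)) (p : A[X]) :
    (p * q).eval x = p.eval x * q.eval x := by
  induction p using Polynomial.induction_on' with
  | add p₁ p₂ h₁ h₂ => rw [add_mul, eval_add, eval_add, add_mul, h₁, h₂]
  | monomial n a =>
    rw [← C_mul_X_pow_eq_monomial, mul_assoc, X_pow_mul, eval_C_mul, eval_mul_X_pow, eval_C_mul,
      eval_X_pow, mul_assoc, (h.pow_left n).eq]

/-- The operator obtained from `companionOp` with `P ∈ R[z]` by substituting `quarticOp φ d V W`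
for the spectral parameter `z`, with its powers written on the right of the coefficients. -/
noncomputable def mironovOp (δ : Derivation k R R) (φ : R →+* A) (d : A) (V W : R) (P : R[X]) : A :=
  (companionOp (coeffDerivation δ) (mapRingHom φ) (C d) (C V) P).eval (quarticOp φ d V W)

theorem mironovOp_eq_sum (δ : Derivation k R R) (φ : R →+* A) (d : A) (V W : R) (P : R[X]) {n : ℕ}
    (hP : P.natDegree ≤ n) :
    mironovOp δ φ d V W P =
      ∑ i ∈ range (n + 1), companionOp δ φ d V (P.coeff i) * quarticOp φ d V W ^ i := by
  rw [mironovOp, eval_eq_sum_range' (n := n + 1)]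
  · simp only [coeff_companionOp]
  · rw [Nat.lt_succ_iff, natDegree_le_iff_coeff_eq_zero]
    intro i hi
    rw [coeff_companionOp, coeff_eq_zero_of_natDegree_lt (hP.trans_lt hi)]
    simp [companionOp]

theorem commute_quarticOp_mironovOp (hd : Implements δ φ d) {V W : R} {P : R[X]}
    (hP : IsMironovSolution δ V W P) :
    Commute (quarticOp φ d V W) (mironovOp δ φ d V W P) := by
  rw [IsMironovSolution] at hP
  set L := quarticOp φ d V W
  set B := companionOp (coeffDerivation δ) (mapRingHom φ) (C d) (C V) P
  set Q := mapRingHom φ (8 * coeffDerivation δ P) * C d +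
    mapRingHom φ (4 * coeffDerivation δ (coeffDerivation δ P)) with hQ
  have two_mul_ode : 2 * -(4 * X * coeffDerivation δ P) = -(X * (8 * coeffDerivation δ P)) := by
    ring
  have deriv_ode : coeffDerivation δ (-(4 * X * coeffDerivation δ P)) =
      -(X * (4 * coeffDerivation δ (coeffDerivation δ P))) := by
    simp only [map_neg, Derivation.leibniz, derivation_ofNat, coeffDerivation_X, smul_eq_mul]
    ring
  have commutator : C L * B - B * C L = Q * C L - Q * X := by
    rw [← mapRingHom_quarticOp, quarticOp_mul_companionOp_sub hd.coeffDerivation, hP, two_mul_ode,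
      deriv_ode, map_neg, map_neg, map_mul _ X, map_mul _ X, hQ, coe_mapRingHom, map_X, neg_mul,
      mul_assoc X, add_assoc, ← neg_add, ← mul_add, ← sub_eq_add_neg, X_mul]
  have := congrArg (eval L) commutator
  rwa [eval_sub, eval_sub, eval_C_mul, eval_mul_C_of_commute (.refl L),
    eval_mul_C_of_commute (.refl L), eval_mul_X, sub_self, sub_eq_zero] at this

theorem mironovOp_mul_self (hd : Implements δ φ d) {V W : R} {P : R[X]}
    (hP : IsMironovSolution δ V W P) :
    mironovOp δ φ d V W P * mironovOp δ φ d V W P =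
      ((spectralPoly δ V W P).map φ).eval (quarticOp φ d V W) := by
  set L := quarticOp φ d V W
  have hX : mapRingHom φ (4 * X * P ^ 2 : R[X]) = mapRingHom φ (4 * P ^ 2) * X := by
    rw [mul_right_comm, map_mul, coe_mapRingHom, map_X]
  have hsq := companionOp_mul_self hd.coeffDerivation (C V) (C W) P
  rw [mapRingHom_quarticOp] at hsq
  rw [mironovOp, ← eval_mul_of_commute_eval (commute_quarticOp_mironovOp hd hP), hsq,
    spectralPoly, ← coe_mapRingHom, map_add, eval_add, eval_add, eval_mul_C_of_commute (.refl L),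
    hX, eval_mul_X]

theorem IsMironovSolution.coeffDerivation_spectralPoly {V W : R} {P : R[X]}
    (hP : IsMironovSolution δ V W P) :
    coeffDerivation δ (spectralPoly δ V W P) = 0 := by
  rw [IsMironovSolution] at hP
  simp only [spectralPoly, map_add, Derivation.leibniz, derivation_mironovForm, hP,
    derivation_ofNat, coeffDerivation_X, pow_two, smul_eq_mul]
  ring

end SpectralParameter

section Triangular

/-- `E` does not raise degrees and multiplies coefficients of degree `m` by `lam m` modulo lower
degrees, i.e. its matrix in the monomial basis is upper triangular with diagonal `lam`. -/
def IsTriangular {R : Type*} [CommRing R] (E : R[X] →ₗ[R] R[X]) (lam : ℕ → R) : Prop :=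
  ∀ ⦃p : R[X]⦄ ⦃m : ℕ⦄, p.natDegree ≤ m → (E p).coeff m = lam m * p.coeff m

namespace IsTriangular

theorem map_mem_degreeLT {R : Type*} [CommRing R] {E : R[X] →ₗ[R] R[X]} {lam : ℕ → R}
    (hE : IsTriangular E lam) {n : ℕ} {p : R[X]} (hp : p ∈ degreeLT R n) : E p ∈ degreeLT R n := by
  rw [mem_degreeLT, degree_lt_iff_coeff_zero] at hp ⊢
  intro m hm
  rw [hE (natDegree_le_iff_coeff_eq_zero.2 fun j hj ↦ hp j (hm.trans hj.le)), hp m hm, mul_zero]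

variable {K : Type*} [Field K] {E : K[X] →ₗ[K] K[X]} {lam : ℕ → K}

theorem exists_mem_degreeLT_map_eq (hE : IsTriangular E lam) {n : ℕ} (hlam : ∀ m < n, lam m ≠ 0)
    {r : K[X]} (hr : r ∈ degreeLT K n) : ∃ p ∈ degreeLT K n, E p = r := by
  let F : degreeLT K n →ₗ[K] degreeLT K n := E.restrict fun _ ↦ hE.map_mem_degreeLT
  have injective : Function.Injective F := by
    refine (injective_iff_map_eq_zero F).2 fun p hp ↦ ?_
    by_contra hp0
    have hp0' : (p : K[X]) ≠ 0 := by simpa using hp0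
    have hdeg := (natDegree_lt_iff_degree_lt hp0').2 (mem_degreeLT.1 p.2)
    have hcoeff := hE (le_refl (p : K[X]).natDegree)
    rw [show E p = 0 from congrArg Subtype.val hp, coeff_zero, eq_comm] at hcoeff
    exact mul_ne_zero (hlam _ hdeg) (leadingCoeff_ne_zero.2 hp0') hcoeff
  obtain ⟨p, hp⟩ := LinearMap.surjective_of_injective injective ⟨r, hr⟩
  exact ⟨p, p.2, congrArg Subtype.val hp⟩

theorem exists_degree_eq_map_eq_zero (hE : IsTriangular E lam) {n : ℕ}
    (hlam : ∀ m < n, lam m ≠ 0) (hn : lam n = 0) : ∃ q : K[X], q.degree = n ∧ E q = 0 := by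
  have hXn : E (X ^ n) ∈ degreeLT K n := by
    rw [mem_degreeLT, degree_lt_iff_coeff_zero]
    intro m hm
    rw [hE ((natDegree_X_pow n).trans_le hm), coeff_X_pow]
    rcases hm.eq_or_lt with rfl | hlt
    · rw [hn, zero_mul]
    · rw [if_neg hlt.ne', mul_zero]
  obtain ⟨p, hp, hEp⟩ := hE.exists_mem_degreeLT_map_eq hlam hXn
  refine ⟨X ^ n - p, ?_, by rw [map_sub, hEp, sub_self]⟩
  rw [degree_sub_eq_left_of_degree_lt, degree_X_pow]
  rwa [degree_X_pow, ← mem_degreeLT]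

theorem exists_degree_eq_map_eq (hE : IsTriangular E lam) {n : ℕ} (hlam : ∀ m ≤ n, lam m ≠ 0)
    {r : K[X]} (hr : r.degree = n) : ∃ p : K[X], p.degree = n ∧ E p = r := by
  obtain ⟨p, hp, hEp⟩ := hE.exists_mem_degreeLT_map_eq (n := n + 1)
    (fun m hm ↦ hlam m (Nat.lt_succ_iff.1 hm))
    (mem_degreeLT.2 (hr.trans_lt (by exact_mod_cast n.lt_succ_self)))
  rw [mem_degreeLT, Nat.cast_succ, ← WithBot.coe_one] at hp
  have hpn : p.degree ≤ n := Order.lt_succ_iff.1 hp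
  refine ⟨p, hpn.antisymm (le_degree_of_ne_zero fun hpn0 ↦ ?_), hEp⟩
  have hcoeff := hE (natDegree_le_of_degree_le hpn)
  rw [hpn0, mul_zero, hEp] at hcoeff
  exact coeff_ne_zero_of_eq_degree hr hcoeff

end IsTriangular

end Triangular

section CubicPotential

variable {R : Type*} [CommRing R]

theorem coeff_mul_iterate_derivative {f p : R[X]} {i m : ℕ} (hf : f.natDegree ≤ i)
    (hp : p.natDegree ≤ m) :
    (f * derivative^[i] p).coeff m = f.coeff i * m.descFactorial i * p.coeff m := by
  rcases lt_or_ge m i with hmi | him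
  · rw [iterate_derivative_eq_zero (hp.trans_lt hmi), mul_zero, coeff_zero,
      Nat.descFactorial_of_lt hmi, Nat.cast_zero, mul_zero, zero_mul]
  · obtain ⟨n, rfl⟩ := Nat.exists_eq_add_of_le him
    have hdeg : (derivative^[i] p).natDegree ≤ n :=
      (natDegree_iterate_derivative p i).trans (by omega)
    rw [coeff_mul_add_eq_of_natDegree_le hf hdeg, coeff_iterate_derivative, add_comm n,
      nsmul_eq_mul, mul_assoc]

theorem isTriangular_mironovODE {V : R[X]} (hV : V.natDegree ≤ 3) (c : R) :
    IsTriangular (mironovODE derivative' V (C (c * V.coeff 3) * X))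
      fun m ↦ V.coeff 3 * (2 * (2 * m + 1)) * (m * (m + 1) - c) := by
  intro p m hp
  set W : R[X] := C (c * V.coeff 3) * X with hW
  have hV' : (derivative V).natDegree ≤ 2 := (natDegree_derivative_le V).trans (by omega)
  have hV'' : (derivative (derivative V)).natDegree ≤ 1 :=
    (natDegree_derivative_le _).trans (by omega)
  have collect : mironovODE derivative' V W p =
      1 * derivative^[5] p + 4 * V * derivative^[3] p + 6 * derivative V * derivative^[2] p +
        (2 * derivative (derivative V) - 4 * W) * derivative^[1] p +
        -2 * derivative W * derivative^[0] p := by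
    simp only [mironovODE_apply, derivative'_apply, Function.iterate_succ, Function.iterate_zero,
      Function.comp_apply, id]
    ring
  rw [collect, coeff_add, coeff_add, coeff_add, coeff_add,
    coeff_mul_iterate_derivative (by simp) hp,
    coeff_mul_iterate_derivative (by compute_degree!) hp,
    coeff_mul_iterate_derivative (by compute_degree!) hp,
    coeff_mul_iterate_derivative (by rw [hW]; compute_degree!) hp,
    coeff_mul_iterate_derivative (by rw [hW, derivative_C_mul_X]; compute_degree!) hp]
  simp only [← descPochhammer_eval_eq_descFactorial]
  simp only [coeff_one, OfNat.ofNat_ne_zero, ↓reduceIte, descPochhammer_succ_eval,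
    descPochhammer_one, eval_X, Nat.cast_one, Nat.cast_ofNat, zero_mul, coeff_ofNat_mul, zero_add,
    coeff_derivative, Nat.reduceAdd, hW, coeff_sub, coeff_mul_X, coeff_C_zero, derivative_C_mul_X,
    neg_mul, coeff_neg, descPochhammer_zero, eval_one]
  ring

/-- The linear term `W = g(g+1)v₃u` for which, next to a cubic `V` with leading coefficient `v₃`,
Mironov's equation has a solution of degree `g` in the spectral parameter. -/
noncomputable def lamePotential (V : R[X]) (g : ℕ) : R[X] := C (g * (g + 1) * V.coeff 3) * X

theorem natDegree_lamePotential_le (V : R[X]) (g : ℕ) : (lamePotential V g).natDegree ≤ 1 := by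
  rw [lamePotential]
  compute_degree

variable {K : Type*} [Field K] [CharZero K]

theorem mironovODE_eigenvalue_ne_zero {v : K} (hv : v ≠ 0) {m g : ℕ} (hm : m < g) :
    v * (2 * (2 * m + 1)) * (m * (m + 1) - g * (g + 1)) ≠ 0 := by
  have hodd : (2 * (2 * m + 1) : K) ≠ 0 := by exact_mod_cast (by omega : 2 * (2 * m + 1) ≠ 0)
  have hlt : m * (m + 1) < g * (g + 1) := Nat.mul_lt_mul'' hm (by omega)
  exact mul_ne_zero (mul_ne_zero hv hodd) (sub_ne_zero.2 (by exact_mod_cast hlt.ne))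

theorem exists_seq_mironovODE_succ_eq {V : K[X]} (hV : V.natDegree = 3) (g : ℕ) :
    ∃ q : ℕ → K[X], mironovODE derivative' V (lamePotential V g) (q 0) = 0 ∧
      (∀ i < g, mironovODE derivative' V (lamePotential V g) (q (i + 1)) =
        -(4 * derivative (q i))) ∧ ∀ i ≤ g, (q i).degree = (g - i : ℕ) := by
  set E := mironovODE derivative' V (lamePotential V g)
  have hE : IsTriangular E _ := isTriangular_mironovODE hV.le (g * (g + 1))
  have hv : V.coeff 3 ≠ 0 := by
    rw [← hV]
    exact leadingCoeff_ne_zero.2 (ne_zero_of_natDegree_gt (hV.symm ▸ zero_lt_three))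
  have step (q : K[X]) (m : ℕ) (hm : m < g) (hq : q.degree = (m + 1 : ℕ)) :
      ∃ p : K[X], p.degree = m ∧ E p = -(4 * derivative q) := by
    have hq' := natDegree_eq_of_degree_eq_some hq
    refine hE.exists_degree_eq_map_eq
      (fun j hj ↦ mironovODE_eigenvalue_ne_zero hv (hj.trans_lt hm)) ?_
    rw [degree_neg, ← map_ofNat C 4, degree_C_mul (by norm_num : (4 : K) ≠ 0),
      degree_derivative (by omega), hq', Nat.add_sub_cancel]
  obtain ⟨q₀, hq₀, hEq₀⟩ := hE.exists_degree_eq_map_eq_zero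
    (fun m hm ↦ mironovODE_eigenvalue_ne_zero hv hm) (by rw [sub_self, mul_zero])
  choose! next degree_next map_next using step
  let q (n : ℕ) : K[X] := Nat.rec q₀ (fun i p ↦ next p (g - (i + 1))) n
  have degree_q (i : ℕ) (hi : i ≤ g) : (q i).degree = (g - i : ℕ) := by
    induction i with
    | zero => exact hq₀
    | succ i ih =>
      refine degree_next _ _ (by omega) ((ih (by omega)).trans ?_)
      congr 1
      omega
  refine ⟨q, hEq₀, fun i hi ↦ map_next _ _ (by omega) ?_, degree_q⟩
  rw [degree_q i hi.le]
  congr 1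
  omega

-- The leading coefficient `1/2` is the one for which the spectral polynomial is monic.
theorem exists_isMironovSolution {V : K[X]} (hV : V.natDegree = 3) (g : ℕ) :
    ∃ P : K[X][X], IsMironovSolution derivative' V (lamePotential V g) P ∧
      P.natDegree ≤ g ∧ P.coeff g = C (1 / 2) ∧ ∀ i, (P.coeff i).natDegree ≤ g - i := by
  obtain ⟨q, map_q_zero, map_q_succ, degree_q⟩ := exists_seq_mironovODE_succ_eq hV g
  set a : K := (q g).coeff 0
  have degree_qg : (q g).degree = (0 : ℕ) := by rw [degree_q g le_rfl, Nat.sub_self]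
  have ha : a ≠ 0 := coeff_ne_zero_of_eq_degree degree_qg
  have hqg : q g = C a := eq_C_of_degree_eq_zero degree_qg
  let P : K[X][X] := ∑ j ∈ range (g + 1), monomial j ((2 * a)⁻¹ • q j)
  have coeff_P {i : ℕ} (hi : i ≤ g) : P.coeff i = (2 * a)⁻¹ • q i := by
    simp [P, coeff_monomial, hi]
  have coeff_P_of_lt {i : ℕ} (hi : g < i) : P.coeff i = 0 := by
    simp [P, coeff_monomial, hi]
  have coeff_P_self : P.coeff g = C (1 / 2) := by
    rw [coeff_P le_rfl, hqg, smul_C, smul_eq_mul]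
    congr 1
    field_simp
  refine ⟨P, ?_, natDegree_le_iff_coeff_eq_zero.2 fun i ↦ coeff_P_of_lt, coeff_P_self, fun i ↦ ?_⟩
  · ext1 i
    rw [coeff_mironovODE, coeff_neg, mul_assoc, coeff_ofNat_mul]
    cases i with
    | zero => rw [coeff_P g.zero_le, map_smul, map_q_zero, coeff_X_mul_zero]; simp
    | succ i =>
      rw [coeff_X_mul, coeff_coeffDerivation, derivative'_apply]
      rcases lt_trichotomy i g with hi | rfl | hi
      · rw [coeff_P hi, coeff_P hi.le, map_smul, map_q_succ i hi, derivative_smul,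
          mul_smul_comm, smul_neg]
      · rw [coeff_P_of_lt i.lt_succ_self, coeff_P_self, derivative_C, map_zero]; simp
      · rw [coeff_P_of_lt hi, coeff_P_of_lt (hi.trans i.lt_succ_self), map_zero]; simp
  · rcases le_or_gt i g with hi | hi
    · rw [coeff_P hi]
      exact (natDegree_smul_le _ _).trans (natDegree_le_of_degree_le (degree_q i hi).le)
    · rw [coeff_P_of_lt hi, natDegree_zero]
      exact Nat.zero_le _

end CubicPotential

section Spectral

theorem natDegree_mironovForm_le {k R : Type*} [CommRing k] [CommRing R] [Algebra k R]
    (δ : Derivation k R R) (V W : R) {P : R[X]} {n : ℕ} (hP : P.natDegree ≤ n) :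
    (mironovForm (coeffDerivation δ) (C V) (C W) P).natDegree ≤ 2 * n := by
  have hδ {Q : R[X]} (hQ : Q.natDegree ≤ n) : (coeffDerivation δ Q).natDegree ≤ n :=
    (natDegree_coeffDerivation_le δ Q).trans hQ
  have h₁ := hδ hP
  have h₂ := hδ h₁
  have h₃ := hδ h₂
  have h₄ := hδ h₃
  rw [mironovForm, coeffDerivation_C, two_mul n]
  compute_degree
  all_goals omega

theorem exists_map_C_of_coeffDerivation_eq_zero {R : Type*} [CommRing R]
    [IsAddTorsionFree R] {F : R[X][X]} (hF : coeffDerivation derivative' F = 0) :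
    ∃ f : R[X], f.map C = F := by
  refine ⟨F.map constantCoeff, ?_⟩
  ext1 i
  rw [coeff_map, coeff_map, constantCoeff_apply]
  refine (eq_C_of_derivative_eq_zero ?_).symm
  rw [← derivative'_apply, ← coeff_coeffDerivation, hF, coeff_zero]

variable {K : Type*} [Field K] [CharZero K]

theorem exists_isMonicOfDegree_map_C_eq_spectralPoly {V W : K[X]} {P : K[X][X]} {g : ℕ}
    (hP : IsMironovSolution derivative' V W P) (hdeg : P.natDegree ≤ g)
    (hlead : P.coeff g = C (1 / 2)) :
    ∃ f : K[X], f.IsMonicOfDegree (2 * g + 1) ∧ f.map C = spectralPoly derivative' V W P := by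
  obtain ⟨f, hf⟩ := exists_map_C_of_coeffDerivation_eq_zero hP.coeffDerivation_spectralPoly
  have hform := natDegree_mironovForm_le derivative' V W hdeg
  refine ⟨f, (isMonicOfDegree_iff _ _).2 ⟨?_, C_injective ?_⟩, hf⟩
  · rw [← natDegree_map_eq_of_injective C_injective, hf, spectralPoly]
    compute_degree
    omega
  · have hsq : (P ^ 2).coeff (2 * g) = C (1 / 2) ^ 2 := by
      rw [coeff_pow_of_natDegree_le hdeg, hlead]
    rw [← coeff_map, hf, spectralPoly, coeff_add,
      coeff_eq_zero_of_natDegree_lt (Nat.lt_succ_of_le hform), add_zero, mul_assoc, coeff_ofNat_mul,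
      coeff_X_mul, hsq, ← map_ofNat C 4, ← C_pow, ← C_mul]
    norm_num

end Spectral

section Heisenberg

variable {K A : Type*} [CommRing K] [Ring A] [Algebra K A]

theorem implements_derivative_aeval {u d : A} (h : d * u = u * d + 1) :
    Implements (derivative' (R := K)) (aeval u).toRingHom d := by
  intro f
  change d * aeval u f = aeval u f * d + aeval u (derivative f)
  induction f using Polynomial.induction_on' with
  | add p q hp hq => rw [derivative_add, map_add, map_add, mul_add, hp, hq]; noncomm_ring
  | monomial n a =>
    induction n with
    | zero => simp [Algebra.commutes]
    | succ n ih =>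
      rw [← monomial_mul_X, derivative_mul, derivative_X, mul_one, map_add, map_mul, map_mul,
        aeval_X, ← mul_assoc, ih, add_mul, mul_assoc, h]
      noncomm_ring

end Heisenberg

section Order

variable {R : Type*} [CommRing R]

local notation "∂" => (derivative : Module.End R R[X])

variable (R) in
/-- The differential operators of order less than `n` with polynomial coefficients, as a submodule
for the action `p • T` of multiplication operators from the left. -/
noncomputable def orderLT (n : ℕ) : Submodule R[X] (Module.End R R[X]) :=
  Submodule.span R[X] ((fun j ↦ ∂ ^ j) '' (range n : Set ℕ))

theorem derivative_pow_mem_orderLT {j n : ℕ} (h : j < n) : ∂ ^ j ∈ orderLT R n :=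
  Submodule.subset_span ⟨j, by simpa using h, rfl⟩

theorem orderLT_mono : Monotone (orderLT R) := fun _ _ h ↦
  Submodule.span_mono (Set.image_mono (by simpa using h))

theorem exists_sum_of_mem_orderLT {T : Module.End R R[X]} {n : ℕ} (hT : T ∈ orderLT R n) :
    ∃ P : ℕ → R[X], T = ∑ j ∈ range n, LinearMap.mulLeft R (P j) * ∂ ^ j := by
  obtain ⟨P, hP⟩ := (Submodule.mem_span_image_finset_iff_exists_fun' R[X]).1 hT
  exact ⟨P, hP.symm⟩

theorem mulLeft_eq_smul_one (p : R[X]) : LinearMap.mulLeft R p = p • (1 : Module.End R R[X]) :=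
  LinearMap.ext fun _ ↦ rfl

theorem derivative_mul_smul (p : R[X]) (T : Module.End R R[X]) :
    ∂ * p • T = p • (∂ * T) + derivative p • T := by
  refine LinearMap.ext fun q ↦ ?_
  change derivative (p * T q) = p * derivative (T q) + derivative p * T q
  rw [derivative_mul, add_comm]

theorem derivative_mul_mem_orderLT {T : Module.End R R[X]} {n : ℕ} (hT : T ∈ orderLT R n) :
    ∂ * T ∈ orderLT R (n + 1) := by
  induction hT using Submodule.span_induction with
  | mem T hT =>
    obtain ⟨j, hj, rfl⟩ := hT
    rw [← pow_succ']
    exact derivative_pow_mem_orderLT (by simpa using hj)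
  | zero => rw [mul_zero]; exact zero_mem _
  | add S T _ _ hS hT => rw [mul_add]; exact add_mem hS hT
  | smul p T hT hDT =>
    rw [derivative_mul_smul]
    exact add_mem (Submodule.smul_mem _ p hDT)
      (Submodule.smul_mem _ _ (orderLT_mono n.le_succ hT))

theorem derivative_pow_mul_mem_orderLT {T : Module.End R R[X]} {n : ℕ} (hT : T ∈ orderLT R n)
    (m : ℕ) : ∂ ^ m * T ∈ orderLT R (n + m) := by
  induction m with
  | zero => rwa [pow_zero, one_mul]
  | succ m ih => rw [pow_succ', mul_assoc]; exact derivative_mul_mem_orderLT ih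

theorem mul_mem_orderLT {S T : Module.End R R[X]} {m n : ℕ} (hS : S ∈ orderLT R m)
    (hT : T ∈ orderLT R (n + 1)) : S * T ∈ orderLT R (m + n) := by
  induction hS using Submodule.span_induction with
  | mem S hS =>
    obtain ⟨j, hj, rfl⟩ := hS
    rw [coe_range, Set.mem_Iio] at hj
    exact orderLT_mono (by omega) (derivative_pow_mul_mem_orderLT hT j)
  | zero => rw [zero_mul]; exact zero_mem _
  | add S S' _ _ hS hS' => rw [add_mul]; exact add_mem hS hS'
  | smul p S _ hS => rw [smul_mul_assoc]; exact Submodule.smul_mem _ p hS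

theorem aeval_derivative_mem_orderLT {q : R[X]} {n : ℕ} (hq : q.natDegree ≤ n) :
    aeval ∂ q ∈ orderLT R (n + 1) := by
  rw [aeval_eq_sum_range' (Nat.lt_succ_of_le hq)]
  exact sum_mem fun j hj ↦
    Submodule.smul_of_tower_mem _ _ (derivative_pow_mem_orderLT (mem_range.1 hj))

/-- `T` is a differential operator of order `n` with polynomial coefficients and leading
coefficient `1`. -/
def IsMonicOfOrder (T : Module.End R R[X]) (n : ℕ) : Prop := T - ∂ ^ n ∈ orderLT R n

namespace IsMonicOfOrder

variable {S T : Module.End R R[X]} {m n : ℕ}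

theorem mem_orderLT (hT : IsMonicOfOrder T n) : T ∈ orderLT R (n + 1) := by
  have := add_mem (orderLT_mono n.le_succ hT) (derivative_pow_mem_orderLT n.lt_succ_self)
  rwa [sub_add_cancel] at this

theorem add (hT : IsMonicOfOrder T n) (hS : S ∈ orderLT R n) : IsMonicOfOrder (T + S) n := by
  rw [IsMonicOfOrder, add_sub_right_comm]
  exact add_mem hT hS

theorem mul (hS : IsMonicOfOrder S m) (hT : IsMonicOfOrder T n) :
    IsMonicOfOrder (S * T) (m + n) := by
  have hsplit : S * T - ∂ ^ (m + n) = (S - ∂ ^ m) * T + ∂ ^ m * (T - ∂ ^ n) := by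
    rw [sub_mul, mul_sub, ← pow_add, sub_add_sub_cancel]
  rw [IsMonicOfOrder, hsplit]
  exact add_mem (mul_mem_orderLT hS hT.mem_orderLT)
    (add_comm n m ▸ derivative_pow_mul_mem_orderLT hT m)

theorem pow (hT : IsMonicOfOrder T n) (i : ℕ) : IsMonicOfOrder (T ^ i) (n * i) := by
  induction i with
  | zero => simp [IsMonicOfOrder]
  | succ i ih => rw [pow_succ, mul_add_one]; exact ih.mul hT

theorem exists_sum [Nontrivial R] (hT : IsMonicOfOrder T n) :
    ∃ P : ℕ → R[X], T = ∑ j ∈ range (n + 1), LinearMap.mulLeft R (P j) * ∂ ^ j ∧ P n ≠ 0 := by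
  obtain ⟨P, hP⟩ := exists_sum_of_mem_orderLT hT
  refine ⟨Function.update P n 1, ?_, by simp⟩
  rw [sum_range_succ, Function.update_self, LinearMap.mulLeft_one, ← Module.End.one_eq_id, one_mul,
    ← sub_eq_iff_eq_add, hP]
  refine sum_congr rfl fun j hj ↦ ?_
  rw [Function.update_of_ne (mem_range.1 hj).ne]

end IsMonicOfOrder

variable {d : Module.End R R[X]} {k : ℕ} {V W : R[X]}

theorem IsMonicOfOrder.sq_add_aeval (hd : IsMonicOfOrder d k) (hV : V.natDegree < 2 * k) :
    IsMonicOfOrder (d ^ 2 + aeval ∂ V) (2 * k) :=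
  (mul_comm k 2 ▸ hd.pow 2).add (orderLT_mono hV (aeval_derivative_mem_orderLT le_rfl))

theorem IsMonicOfOrder.quarticOp (hd : IsMonicOfOrder d k) (hV : V.natDegree < 2 * k)
    (hW : W.natDegree < 4 * k) :
    IsMonicOfOrder (quarticOp (aeval ∂).toRingHom d V W) (4 * k) := by
  have := ((hd.sq_add_aeval hV).pow 2).add (S := aeval ∂ W) (orderLT_mono (by omega)
    (aeval_derivative_mem_orderLT le_rfl))
  rwa [show 2 * k * 2 = 4 * k by ring] at this

theorem companionOp_mem_orderLT (hd : IsMonicOfOrder d k) (hV : V.natDegree < 2 * k) {p : R[X]}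
    {m : ℕ} (hp : p.natDegree ≤ m) :
    companionOp derivative' (aeval ∂).toRingHom d V p ∈ orderLT R (m + 1 + 2 * k) := by
  have hp' : (derivative p).natDegree ≤ m := (natDegree_derivative_le p).trans (by omega)
  have hp'' : (derivative (derivative p)).natDegree ≤ m :=
    (natDegree_derivative_le _).trans (by omega)
  refine add_mem (sub_mem ?_ ?_) ?_
  · exact mul_mem_orderLT (aeval_derivative_mem_orderLT (by compute_degree!))
      (hd.sq_add_aeval hV).mem_orderLT
  · exact orderLT_mono (by omega) (mul_mem_orderLT (m := m + 1) (aeval_derivative_mem_orderLT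
      (by rw [derivative'_apply]; compute_degree!)) hd.mem_orderLT)
  · exact orderLT_mono (by omega) (aeval_derivative_mem_orderLT hp'')

theorem companionOp_C {A : Type*} [Ring A] (φ : R[X] →+* A) (d : A) (V : R[X]) {a : R}
    (ha : 2 * a = 1) : companionOp derivative' φ d V (C a) = d ^ 2 + φ V := by
  rw [companionOp, derivative'_apply, derivative'_apply, derivative_C, derivative_zero, mul_zero,
    map_zero, zero_mul, sub_zero, add_zero, ← map_ofNat C 2, ← C_mul, ha, C_1, map_one, one_mul]

theorem isMonicOfOrder_mironovOp (hd : IsMonicOfOrder d k) (hk : 0 < k) (hV : V.natDegree < 2 * k)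
    (hW : W.natDegree < 4 * k) {P : R[X][X]} {g : ℕ} {a : R} (ha : 2 * a = 1)
    (hdeg : P.natDegree ≤ g) (hlead : P.coeff g = C a)
    (hcoeff : ∀ i, (P.coeff i).natDegree ≤ g - i) :
    IsMonicOfOrder (mironovOp derivative' (aeval ∂).toRingHom d V W P) (4 * k * g + 2 * k) := by
  have hL := hd.quarticOp hV hW
  rw [mironovOp_eq_sum _ _ _ _ _ _ hdeg, sum_range_succ, add_comm, hlead, companionOp_C _ _ _ ha]
  refine (add_comm (2 * k) _ ▸ (hd.sq_add_aeval hV).mul (hL.pow g)).add (sum_mem fun i hi ↦ ?_)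
  have hterm := mul_mem_orderLT (companionOp_mem_orderLT hd hV (hcoeff i)) (hL.pow i).mem_orderLT
  refine orderLT_mono ?_ hterm
  obtain ⟨j, rfl⟩ := Nat.exists_eq_add_of_lt (mem_range.1 hi)
  have hj : j + 1 ≤ k * (j + 1) := Nat.le_mul_of_pos_left _ hk
  rw [show i + j + 1 - i = j + 1 by omega]
  linarith

/-- The operator `d = ∂ᵏ - x`; together with `u = ∂` it satisfies the relation `[d, u] = 1` between
`d/du` and `u`. -/
noncomputable def airyOp (R : Type*) [CommRing R] (k : ℕ) : Module.End R R[X] :=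
  derivative ^ k - LinearMap.mulLeft R X

theorem derivative_mul_mulLeft_X :
    ∂ * LinearMap.mulLeft R X = LinearMap.mulLeft R X * ∂ + 1 := by
  rw [mulLeft_eq_smul_one, derivative_mul_smul, derivative_X, one_smul, mul_one, smul_one_mul]

theorem derivative_pow_mul_mulLeft_X (n : ℕ) :
    ∂ ^ (n + 1) * LinearMap.mulLeft R X =
      LinearMap.mulLeft R X * ∂ ^ (n + 1) + (n + 1 : R) • ∂ ^ n := by
  induction n with
  | zero => simp [derivative_mul_mulLeft_X]
  | succ n ih =>
    rw [pow_succ' _ (n + 1), mul_assoc, ih, mul_add, ← mul_assoc, derivative_mul_mulLeft_X,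
      mul_smul_comm, ← pow_succ', add_mul, mul_assoc, ← pow_succ', one_mul, add_assoc]
    push_cast
    module

theorem airyOp_mul_derivative (k : ℕ) : airyOp R k * ∂ = ∂ * airyOp R k + 1 := by
  rw [airyOp, sub_mul, mul_sub, derivative_mul_mulLeft_X, ← pow_succ, ← pow_succ',
    sub_add_eq_sub_sub, sub_add_cancel]

theorem isMonicOfOrder_airyOp {k : ℕ} (hk : 0 < k) : IsMonicOfOrder (airyOp R k) k := by
  rw [IsMonicOfOrder, airyOp, sub_sub_cancel_left, mulLeft_eq_smul_one, ← pow_zero ∂]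
  exact neg_mem (Submodule.smul_mem _ X (derivative_pow_mem_orderLT hk))

theorem airyOp_sq {k : ℕ} (hk : 0 < k) :
    airyOp R k ^ 2 = ∂ ^ (2 * k) - 2 • (LinearMap.mulLeft R X * ∂ ^ k) - (k : R) • ∂ ^ (k - 1)
      + LinearMap.mulLeft R X ^ 2 := by
  obtain ⟨n, rfl⟩ := Nat.exists_eq_add_of_lt hk
  rw [zero_add, airyOp, pow_two, sub_mul, mul_sub, mul_sub, derivative_pow_mul_mulLeft_X,
    ← pow_add, ← two_mul, Nat.add_sub_cancel, ← pow_two]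
  push_cast
  module

theorem airyOp_sq_add_aeval_X_cube_add_C {k : ℕ} (hk : 0 < k) (α : R) :
    airyOp R k ^ 2 + aeval ∂ (X ^ 3 + C α) =
      ∂ ^ (2 * k) - 2 • (LinearMap.mulLeft R X * ∂ ^ k) - (k : R) • ∂ ^ (k - 1) + ∂ ^ 3
        + LinearMap.mulLeft R X ^ 2 + α • (1 : Module.End R R[X]) := by
  rw [airyOp_sq hk, map_add, map_pow, aeval_X, aeval_C, Algebra.algebraMap_eq_smul_one,
    ← add_assoc, add_right_comm _ _ (∂ ^ 3)]

end Order

section Mokhov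

variable {K A : Type*} [CommRing K] [Ring A] [Algebra K A]

theorem eval_map_aeval_map_C (u x : A) (f : K[X]) :
    ((f.map C).map (aeval (R := K) u).toRingHom).eval x = aeval x f := by
  have hC : (aeval (R := K) u).toRingHom.comp C = algebraMap K A := RingHom.ext (aeval_C u)
  rw [Polynomial.map_map, hC, aeval_def, eval₂_eq_eval_map]

theorem aeval_eq_of_isMonicOfDegree {f : K[X]} {n : ℕ} (hf : f.IsMonicOfDegree n)
    (x : A) : aeval x f = x ^ n + ∑ i ∈ range n, f.coeff i • x ^ i := by
  conv_lhs => rw [hf.monic.as_sum, hf.natDegree_eq]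
  simp [Algebra.smul_def]

end Mokhov

theorem mokhov_even_rank_general {K : Type*} [Field K] [CharZero K] {k : ℕ} (hk : 1 < k) (g : ℕ)
    {V : K[X]} (hV : V.natDegree = 3) {L : Module.End K K[X]}
    (hL : L = (airyOp K k ^ 2 + aeval derivative V) ^ 2
      + (g * (g + 1) * V.coeff 3 : K) • derivative) :
    ∃ (M : Module.End K K[X]) (P : ℕ → K[X]) (a : ℕ → K),
      M = ∑ j ∈ range (4 * k * g + 2 * k + 1), LinearMap.mulLeft K (P j) * derivative ^ j ∧
      P (4 * k * g + 2 * k) ≠ 0 ∧ L * M = M * L ∧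
      M ^ 2 = L ^ (2 * g + 1) + ∑ i ∈ range (2 * g + 1), a i • L ^ i := by
  have hL_quartic :
      L = quarticOp (aeval derivative).toRingHom (airyOp K k) V (lamePotential V g) := by
    simp [hL, quarticOp, lamePotential, Algebra.smul_def]
  have implements_airy := implements_derivative_aeval (K := K) (airyOp_mul_derivative (R := K) k)
  obtain ⟨P, hode, hdeg, hlead, hcoeff⟩ := exists_isMironovSolution hV g
  obtain ⟨f, hf, map_f⟩ := exists_isMonicOfDegree_map_C_eq_spectralPoly hode hdeg hlead
  have hk₀ : 0 < k := by omega
  have order_M := isMonicOfOrder_mironovOp (isMonicOfOrder_airyOp hk₀) hk₀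
    (hV.trans_lt (by omega)) ((natDegree_lamePotential_le V g).trans_lt (by omega)) (by norm_num)
    hdeg hlead hcoeff
  obtain ⟨Q, sum_Q, Q_ne_zero⟩ := order_M.exists_sum
  rw [hL_quartic]
  refine ⟨_, Q, f.coeff, sum_Q, Q_ne_zero, commute_quarticOp_mironovOp implements_airy hode, ?_⟩
  rw [pow_two, mironovOp_mul_self implements_airy hode, ← map_f, eval_map_aeval_map_C,
    aeval_eq_of_isMonicOfDegree hf]

/-- (Theorem 1) For `k > 1`, `g ≥ 1` and `α ≠ 0`, the operator
`L = (D^{2k} − 2X∘D^k − k·D^{k−1} + D³ + X² + α)² + g(g+1)·D` of order `4k`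
admits a commuting operator `M` of order `4kg + 2k` with polynomial
coefficients, satisfying `M² = L^{2g+1} + a_{2g}·L^{2g} + … + a₁·L + a₀`
for some constants `a₀, …, a_{2g}`; so `L` and `M` are commuting operators of
rank `2k` and genus `g`. -/
theorem mokhov_even_rank (k : ℕ) (hk : 1 < k) (g : ℕ) (hg : 1 ≤ g)
    (α : ℂ) (hα : α ≠ 0) :
    letI one : Module.End ℂ (Polynomial ℂ) := 1
    letI L : Module.End ℂ (Polynomial ℂ) :=
      (Dop ^ (2 * k) - 2 • (Xop * Dop ^ k) - (k : ℂ) • Dop ^ (k - 1)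
          + Dop ^ 3 + Xop ^ 2 + α • one) ^ 2
        + ((g : ℂ) * ((g : ℂ) + 1)) • Dop
    ∃ (M : Module.End ℂ (Polynomial ℂ)) (P : ℕ → Polynomial ℂ) (a : ℕ → ℂ),
      M = ∑ j ∈ Finset.range (4 * k * g + 2 * k + 1),
            LinearMap.mulLeft ℂ (P j) * Dop ^ j ∧
      P (4 * k * g + 2 * k) ≠ 0 ∧
      L * M = M * L ∧
      M ^ 2 = L ^ (2 * g + 1) + ∑ i ∈ Finset.range (2 * g + 1), a i • L ^ i := by
  unfold Dop Xop
  exact mokhov_even_rank_general hk g (V := X ^ 3 + C α) (by compute_degree!)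
    (by rw [airyOp_sq_add_aeval_X_cube_add_C (by omega)]; simp)
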